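/- If u is harmonic on a domain D ⊆ ℝ^m (m ≥ 2) and the closed ball of radius r centered at x is contained in D, then u(x) = (m/|B_r|) ∫_{B_r(x)} u(y) log(r/|x−y|) dy, where |B_r| is the volume of the ball of radius r. -/

import Mathlib

open MeasureTheory Metric Real

noncomputable def laplacian {m : ℕ} (u : EuclideanSpace ℝ (Fin m) → ℝ)
    (x : EuclideanSpace ℝ (Fin m)) : ℝ :=
  ∑ i : Fin m, fderiv ℝ (fun y => fderiv ℝ u y (EuclideanSpace.single i 1)) x
    (EuclideanSpace.single i 1)

def HarmonicOn {m : ℕ} (u : EuclideanSpace ℝ (Fin m) → ℝ)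
    (D : Set (EuclideanSpace ℝ (Fin m))) : Prop :=
  ContDiffOn ℝ 2 u D ∧ ∀ x ∈ D, laplacian u x = 0

/-!
Every radial weight satisfies the weighted mean value property
`∫ w ‖y‖ • f (x + y) = (∫ w ‖y‖) • f x`: the field `y ↦ w ‖y‖ • y` is the gradient of a compactly
supported radial potential, so integrating by parts against `Δ f = 0` shows that
`∫ w ‖y‖ • f (x + s • y)` has zero derivative in `s ∈ [0, 1]`. The logarithmic kernel is the
weight `w t = log⁺ (r / t)`, whose integral over a space of dimension `m` is, in polar
coordinates, `1 / m` times the volume of the ball of radius `r`.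
-/

section NormedSpace

variable {E F : Type*} [NormedAddCommGroup E] [NormedSpace ℝ E] [NormedAddCommGroup F]
  [NormedSpace ℝ F]

lemma integrable_smul_of_continuousAt_tsupport {X : Type*} [TopologicalSpace X]
    [MeasurableSpace X] [OpensMeasurableSpace X] {μ : Measure X} [IsFiniteMeasureOnCompacts μ]
    {φ : X → ℝ} {g : X → F} (hφ : Continuous φ) (hc : HasCompactSupport φ)
    (hg : ∀ x ∈ tsupport φ, ContinuousAt g x) : Integrable (fun x ↦ φ x • g x) μ :=
  (continuous_of_tsupport fun x hx ↦ hφ.continuousAt.smul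
    (hg x (tsupport_smul_subset_left φ g hx))).integrable_of_hasCompactSupport hc.smul_right

lemma integrable_fderiv_smul_of_continuousAt_tsupport [MeasurableSpace E] [BorelSpace E]
    {μ : Measure E} [IsFiniteMeasureOnCompacts μ] {φ : E → ℝ} {g : E → F} (hφ : ContDiff ℝ 1 φ)
    (hc : HasCompactSupport φ) (hg : ∀ y ∈ tsupport φ, ContinuousAt g y) (v : E) :
    Integrable (fun y ↦ fderiv ℝ φ y v • g y) μ :=
  integrable_smul_of_continuousAt_tsupport
    ((hφ.continuous_fderiv one_ne_zero).clm_apply continuous_const) (hc.fderiv_apply ℝ v)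
    fun y hy ↦ hg y (tsupport_fderiv_apply_subset ℝ v hy)

lemma integrable_smul_fderiv_of_contDiffAt_tsupport [MeasurableSpace E] [BorelSpace E]
    {μ : Measure E} [IsFiniteMeasureOnCompacts μ] {φ : E → ℝ} {g : E → F} (hφ : Continuous φ)
    (hc : HasCompactSupport φ) (hg : ∀ y ∈ tsupport φ, ContDiffAt ℝ 1 g y) (v : E) :
    Integrable (fun y ↦ φ y • fderiv ℝ g y v) μ :=
  integrable_smul_of_continuousAt_tsupport hφ hc fun y hy ↦
    ((hg y hy).continuousAt_fderiv one_ne_zero).clm_apply continuousAt_const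

lemma integral_fderiv_smul_eq_neg_integral_smul_fderiv [FiniteDimensional ℝ E]
    [MeasurableSpace E] [BorelSpace E] {μ : Measure E} [μ.IsAddHaarMeasure] {φ : E → ℝ}
    {g : E → F} (hφ : ContDiff ℝ 1 φ) (hc : HasCompactSupport φ)
    (hg : ∀ y ∈ tsupport φ, ContDiffAt ℝ 1 g y) (v : E) :
    ∫ y, fderiv ℝ φ y v • g y ∂μ = -∫ y, φ y • fderiv ℝ g y v ∂μ := by
  have hg_cont : ∀ y ∈ tsupport φ, ContinuousAt g y := fun y hy ↦ (hg y hy).continuousAt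
  rw [integral_smul_fderiv_eq_neg_fderiv_smul_of_integrable
    (integrable_fderiv_smul_of_continuousAt_tsupport hφ hc hg_cont v)
    (integrable_smul_fderiv_of_contDiffAt_tsupport hφ.continuous hc hg v)
    (integrable_smul_of_continuousAt_tsupport hφ.continuous hc hg_cont)
    (fun y _ ↦ hφ.differentiable one_ne_zero y)
    (fun y hy ↦ (hg y hy).differentiableAt one_ne_zero), neg_neg]

lemma continuous_radial_smul_self {w : ℝ → ℝ} (hw : Continuous fun t ↦ t * w t) :
    Continuous fun y : E ↦ w ‖y‖ • y := by
  refine continuous_iff_continuousAt.2 fun y ↦ ?_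
  rcases eq_or_ne y 0 with rfl | hy
  · have hlim : Filter.Tendsto (fun y : E ↦ ‖‖y‖ * w ‖y‖‖) (nhds 0) (nhds 0) :=
      (hw.comp continuous_norm).norm.tendsto' 0 0 (by simp)
    rw [ContinuousAt, smul_zero]
    refine squeeze_zero_norm (fun y ↦ ?_) hlim
    rw [norm_smul, norm_mul, norm_norm, mul_comm]
  · have hwy : ContinuousAt (fun z : E ↦ ‖z‖ * w ‖z‖ / ‖z‖) y :=
      (hw.comp continuous_norm).continuousAt.div₀ continuous_norm.continuousAt
        (norm_ne_zero_iff.2 hy)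
    refine (hwy.smul continuousAt_id).congr ?_
    filter_upwards [eventually_ne_nhds hy] with z hz
    simp [mul_div_cancel_left₀ _ (norm_ne_zero_iff.2 hz)]

lemma add_smul_mem_closedBall {r s : ℝ} (hs : s ∈ Set.Icc (0 : ℝ) 1) (x : E) {y : E}
    (hy : y ∈ closedBall 0 r) : x + s • y ∈ closedBall x r := by
  rw [mem_closedBall_iff_norm, add_sub_cancel_left, norm_smul, Real.norm_of_nonneg hs.1]
  exact (mul_le_of_le_one_left (norm_nonneg y) hs.2).trans (mem_closedBall_zero_iff.1 hy)

lemma fderiv_comp_add_smul {g : E → F} {x y : E} {s : ℝ}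
    (hg : DifferentiableAt ℝ g (x + s • y)) :
    fderiv ℝ (fun z ↦ g (x + s • z)) y = s • fderiv ℝ g (x + s • y) := by
  have := hg.hasFDerivAt.comp y (((hasFDerivAt_id y).const_smul s).const_add x)
  simpa [Function.comp_def] using this.fderiv

lemma continuousOn_fderiv_add_smul {f : E → F} {x : E} {r : ℝ}
    (hf : ∀ y ∈ closedBall x r, ContDiffAt ℝ 1 f y) :
    ContinuousOn (fun p : ℝ × E ↦ fderiv ℝ f (x + p.1 • p.2))
      (Set.Icc 0 1 ×ˢ closedBall 0 r) := fun p hp ↦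
  (((hf _ (add_smul_mem_closedBall hp.1 x hp.2)).continuousAt_fderiv one_ne_zero).comp
    (f := fun p : ℝ × E ↦ x + p.1 • p.2) (by fun_prop)).continuousWithinAt

lemma integral_fderiv_segment_eq_sub [CompleteSpace F] {f : E → F} {x y : E} {r : ℝ}
    (hf : ∀ y ∈ closedBall x r, ContDiffAt ℝ 1 f y) (hy : y ∈ closedBall 0 r) :
    ∫ s in (0 : ℝ)..1, fderiv ℝ f (x + s • y) y = f (x + y) - f x := by
  have hderiv (s : ℝ) (hs : s ∈ Set.uIcc 0 1) :
      HasDerivAt (fun s : ℝ ↦ f (x + s • y)) (fderiv ℝ f (x + s • y) y) s := by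
    rw [Set.uIcc_of_le zero_le_one] at hs
    have hline : HasDerivAt (fun s : ℝ ↦ x + s • y) y s := by
      simpa using ((hasDerivAt_id s).smul_const y).const_add x
    exact ((hf _ (add_smul_mem_closedBall hs x hy)).differentiableAt
      one_ne_zero).hasFDerivAt.comp_hasDerivAt s hline
  have hcont : ContinuousOn (fun s : ℝ ↦ fderiv ℝ f (x + s • y) y) (Set.uIcc 0 1) := by
    rw [Set.uIcc_of_le zero_le_one]
    exact ((continuousOn_fderiv_add_smul hf).comp (f := fun s : ℝ ↦ (s, y)) (by fun_prop)
      fun s hs ↦ ⟨hs, hy⟩).clm_apply continuousOn_const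
  simpa using intervalIntegral.integral_eq_sub_of_hasDerivAt hderiv hcont.intervalIntegrable

end NormedSpace

section RadialWeight

open scoped Laplacian InnerProductSpace

/-- The primitive of `t ↦ t * w t` vanishing at `r`, evaluated at the norm: the radial function
on an inner product space with gradient `y ↦ w ‖y‖ • y` that vanishes on the sphere of
radius `r`. -/
noncomputable def radialPotential {E : Type*} [NormedAddCommGroup E] (w : ℝ → ℝ) (r : ℝ)
    (y : E) : ℝ :=
  ∫ t in r..‖y‖, t * w t

lemma radialPotential_eq_zero {E : Type*} [NormedAddCommGroup E] {w : ℝ → ℝ} {r : ℝ}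
    (hw₀ : ∀ t, r ≤ t → w t = 0) {y : E} (hy : r ≤ ‖y‖) : radialPotential w r y = 0 := by
  refine (intervalIntegral.integral_congr (g := 0) fun t ht ↦ ?_).trans (by simp)
  rw [Set.uIcc_of_le hy] at ht
  simp [hw₀ t ht.1]

lemma tsupport_radialPotential_subset {E : Type*} [NormedAddCommGroup E] {w : ℝ → ℝ} {r : ℝ}
    (hw₀ : ∀ t, r ≤ t → w t = 0) :
    tsupport (radialPotential w r : E → ℝ) ⊆ closedBall 0 r :=
  closure_minimal (fun _ hy ↦ mem_closedBall_zero_iff.2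
    (not_lt.1 fun hlt ↦ hy (radialPotential_eq_zero hw₀ hlt.le))) isClosed_closedBall

variable {E F : Type*} [NormedAddCommGroup E] [InnerProductSpace ℝ E] [NormedAddCommGroup F]
  [NormedSpace ℝ F] {w : ℝ → ℝ} {r : ℝ} {f : E → F} {x : E}

lemma hasFDerivAt_comp_norm {φ : ℝ → ℝ} {c : ℝ} {y : E} (hφ : HasDerivAt φ (‖y‖ * c) ‖y‖) :
    HasFDerivAt (fun z : E ↦ φ ‖z‖) (c • innerSL ℝ y) y := by
  rcases eq_or_ne y 0 with rfl | hy
  · rw [norm_zero, zero_mul, hasDerivAt_iff_isLittleO] at hφ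
    rw [hasFDerivAt_iff_isLittleO]
    have := hφ.comp_tendsto (continuous_norm.tendsto' (0 : E) 0 norm_zero)
    simp only [Function.comp_def, smul_zero, sub_zero] at this
    simpa using this.of_norm_right
  · have norm_ne : ‖y‖ ≠ 0 := norm_ne_zero_iff.2 hy
    have hnorm := (hasStrictFDerivAt_norm_sq y).hasFDerivAt.sqrt (pow_ne_zero 2 norm_ne)
    simp only [Real.sqrt_sq (norm_nonneg _)] at hnorm
    refine (hφ.comp_hasFDerivAt y hnorm).congr_fderiv ?_
    ext z
    simp only [one_div, mul_inv_rev, smul_apply, coe_innerSL_apply, nsmul_eq_mul, Nat.cast_ofNat,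
      smul_eq_mul]
    field_simp

lemma hasFDerivAt_radialPotential (hw : Continuous fun t ↦ t * w t) (y : E) :
    HasFDerivAt (radialPotential w r) (innerSL ℝ (w ‖y‖ • y)) y := by
  rw [map_smul]
  exact hasFDerivAt_comp_norm (hw.integral_hasStrictDerivAt r ‖y‖).hasDerivAt

variable [FiniteDimensional ℝ E]

lemma laplacian_eq_sum_fderiv_fderiv {ι : Type*} [Fintype ι] (b : OrthonormalBasis ι ℝ E)
    (hf : ContDiffAt ℝ 2 f x) :
    Δ f x = ∑ i, fderiv ℝ (fun z ↦ fderiv ℝ f z (b i)) x (b i) := by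
  have hf' : DifferentiableAt ℝ (fderiv ℝ f) x :=
    (hf.fderiv_right (m := 1) (by norm_num)).differentiableAt one_ne_zero
  simp [InnerProductSpace.laplacian_eq_iteratedFDeriv_orthonormalBasis f b,
    iteratedFDeriv_two_apply, fderiv_clm_apply hf']

variable [MeasurableSpace E] [BorelSpace E] {μ : Measure E} [μ.IsAddHaarMeasure]

theorem integral_apply_gradient_eq_neg_integral_smul_divergence {ι : Type*} [Fintype ι]
    (b : OrthonormalBasis ι ℝ E) {φ : E → ℝ} {V : E → E} {L : E → E →L[ℝ] F}
    (hφ : ∀ y, HasFDerivAt φ (innerSL ℝ (V y)) y) (hV : Continuous V) (hc : HasCompactSupport φ)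
    (hL : ∀ y ∈ tsupport φ, ContDiffAt ℝ 1 L y) :
    ∫ y, L y (V y) ∂μ = -∫ y, φ y • ∑ i, fderiv ℝ (fun z ↦ L z (b i)) y (b i) ∂μ := by
  have hφ_contDiff : ContDiff ℝ 1 φ :=
    contDiff_one_iff_hasFDerivAt.2 ⟨_, (innerSL ℝ).continuous.comp hV, hφ⟩
  have hL_apply (i : ι) (y : E) (hy : y ∈ tsupport φ) : ContDiffAt ℝ 1 (fun z ↦ L z (b i)) y :=
    (hL y hy).clm_apply contDiffAt_const
  calc ∫ y, L y (V y) ∂μ = ∫ y, ∑ i, fderiv ℝ φ y (b i) • L y (b i) ∂μ := by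
        congr 1 with y
        conv_lhs => rw [← b.sum_repr' (V y)]
        simp only [map_sum, map_smul, (hφ y).fderiv, innerSL_apply_apply, real_inner_comm]
    _ = ∑ i, ∫ y, fderiv ℝ φ y (b i) • L y (b i) ∂μ :=
        integral_finsetSum _ fun i _ ↦ integrable_fderiv_smul_of_continuousAt_tsupport
          hφ_contDiff hc (fun y hy ↦ (hL_apply i y hy).continuousAt) (b i)
    _ = -∑ i, ∫ y, φ y • fderiv ℝ (fun z ↦ L z (b i)) y (b i) ∂μ := by
        rw [← Finset.sum_neg_distrib]
        exact Finset.sum_congr rfl fun i _ ↦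
          integral_fderiv_smul_eq_neg_integral_smul_fderiv hφ_contDiff hc (hL_apply i) (b i)
    _ = -∫ y, φ y • ∑ i, fderiv ℝ (fun z ↦ L z (b i)) y (b i) ∂μ := by
        simp only [Finset.smul_sum]
        rw [integral_finsetSum _ fun i _ ↦ integrable_smul_fderiv_of_contDiffAt_tsupport
          hφ_contDiff.continuous hc (hL_apply i) (b i)]

theorem integral_fderiv_radial_eq_zero (hw : Continuous fun t ↦ t * w t)
    (hw₀ : ∀ t, r ≤ t → w t = 0) (hf : InnerProductSpace.HarmonicOnNhd f (closedBall x r))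
    {s : ℝ} (hs : s ∈ Set.Icc (0 : ℝ) 1) :
    ∫ y, fderiv ℝ f (x + s • y) (w ‖y‖ • y) ∂μ = 0 := by
  let b := stdOrthonormalBasis ℝ E
  have hf' {y : E} (hy : y ∈ closedBall 0 r) : ContDiffAt ℝ 1 (fderiv ℝ f) (x + s • y) :=
    (hf _ (add_smul_mem_closedBall hs x hy)).1.fderiv_right (by norm_num)
  have hsupp : tsupport (radialPotential w r) ⊆ closedBall (0 : E) r :=
    tsupport_radialPotential_subset hw₀
  have hdiv {y : E} (hy : y ∈ closedBall 0 r) :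
      ∑ i, fderiv ℝ (fun z ↦ fderiv ℝ f (x + s • z) (b i)) y (b i) = 0 := by
    obtain ⟨hf₂, hΔ⟩ := hf _ (add_smul_mem_closedBall hs x hy)
    have hf'_apply (i) : DifferentiableAt ℝ (fun z ↦ fderiv ℝ f z (b i)) (x + s • y) :=
      ((hf' hy).differentiableAt one_ne_zero).clm_apply (differentiableAt_const _)
    have hΔ_apply : Δ f (x + s • y) = 0 := hΔ.self_of_nhds
    rw [laplacian_eq_sum_fderiv_fderiv b hf₂] at hΔ_apply
    simp only [fderiv_comp_add_smul (hf'_apply _), smul_apply, ← Finset.smul_sum, hΔ_apply,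
      smul_zero]
  rw [integral_apply_gradient_eq_neg_integral_smul_divergence b
    (L := fun y ↦ fderiv ℝ f (x + s • y)) (hasFDerivAt_radialPotential hw)
    (continuous_radial_smul_self hw)
    ((isCompact_closedBall 0 r).of_isClosed_subset (isClosed_tsupport _) hsupp)
    fun y hy ↦ (hf' (hsupp hy)).comp y (by fun_prop), neg_eq_zero]
  refine integral_eq_zero_of_ae (.of_forall fun y ↦ ?_)
  by_cases hy : y ∈ closedBall 0 r
  · simp [hdiv hy]
  · simp [image_eq_zero_of_notMem_tsupport (mt (@hsupp y) hy)]

variable [CompleteSpace F]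

theorem integral_radial_smul_sub_eq_zero (hw : Continuous fun t ↦ t * w t)
    (hw₀ : ∀ t, r ≤ t → w t = 0) (hf : InnerProductSpace.HarmonicOnNhd f (closedBall x r)) :
    ∫ y, w ‖y‖ • (f (x + y) - f x) ∂μ = 0 := by
  have hf₁ : ∀ y ∈ closedBall x r, ContDiffAt ℝ 1 f y := fun y hy ↦
    (hf y hy).1.of_le one_le_two
  have hw_norm {y : E} (hy : y ∉ closedBall 0 r) : w ‖y‖ = 0 :=
    hw₀ _ (not_le.1 (mt mem_closedBall_zero_iff.2 hy)).le
  have hint : Integrable (Function.uncurry fun (s : ℝ) (y : E) ↦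
      fderiv ℝ f (x + s • y) (w ‖y‖ • y))
      ((volume.restrict (Set.Icc 0 1)).prod (μ.restrict (closedBall 0 r))) := by
    rw [Measure.prod_restrict]
    exact ((continuousOn_fderiv_add_smul hf₁).clm_apply
      ((continuous_radial_smul_self hw).comp continuous_snd).continuousOn).integrableOn_compact
      (isCompact_Icc.prod (isCompact_closedBall 0 r))
  calc ∫ y, w ‖y‖ • (f (x + y) - f x) ∂μ
      = ∫ y in closedBall 0 r, w ‖y‖ • (f (x + y) - f x) ∂μ :=
        (setIntegral_eq_integral_of_forall_compl_eq_zero fun y hy ↦ by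
          rw [hw_norm hy, zero_smul]).symm
    _ = ∫ y in closedBall 0 r, (∫ s in Set.Icc (0 : ℝ) 1,
          fderiv ℝ f (x + s • y) (w ‖y‖ • y)) ∂μ := by
        refine setIntegral_congr_fun measurableSet_closedBall fun y hy ↦ ?_
        simp only [map_smul, integral_smul]
        rw [integral_Icc_eq_integral_Ioc, ← intervalIntegral.integral_of_le zero_le_one,
          integral_fderiv_segment_eq_sub hf₁ hy]
    _ = ∫ s in Set.Icc (0 : ℝ) 1, (∫ y in closedBall 0 r,
          fderiv ℝ f (x + s • y) (w ‖y‖ • y) ∂μ) := (integral_integral_swap hint).symm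
    _ = 0 := setIntegral_eq_zero_of_forall_eq_zero fun s hs ↦ by
        rw [setIntegral_eq_integral_of_forall_compl_eq_zero fun y hy ↦ by simp [hw_norm hy],
          integral_fderiv_radial_eq_zero hw hw₀ hf hs]

theorem integral_radial_smul_eq_integral_smul (hw : Continuous fun t ↦ t * w t)
    (hw₀ : ∀ t, r ≤ t → w t = 0) (hw_int : Integrable (fun y : E ↦ w ‖y‖) μ)
    (hf : InnerProductSpace.HarmonicOnNhd f (closedBall x r)) :
    ∫ y, w ‖y‖ • f (x + y) ∂μ = (∫ y : E, w ‖y‖ ∂μ) • f x := by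
  have hf_cont : ContinuousOn (fun y ↦ f (x + y)) (closedBall 0 r) :=
    hf.continuousOn.comp (by fun_prop) fun y hy ↦ by simpa using hy
  have hwf_int : Integrable (fun y ↦ w ‖y‖ • f (x + y)) μ := by
    refine (integrableOn_iff_integrable_of_support_subset fun y hy ↦ ?_).1
      (hw_int.integrableOn.smul_continuousOn hf_cont (isCompact_closedBall 0 r))
    by_contra hyr
    exact hy (by simp [hw₀ _ (not_le.1 (mt mem_closedBall_zero_iff.2 hyr)).le])
  have hsub := integral_radial_smul_sub_eq_zero (μ := μ) hw hw₀ hf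
  simp only [smul_sub] at hsub
  rwa [integral_sub hwf_int (hw_int.smul_const _), integral_smul_const, sub_eq_zero] at hsub

end RadialWeight

section LogWeight

lemma posLog_div_eq_zero {r t : ℝ} (hr : 0 ≤ r) (hrt : r ≤ t) : log⁺ (r / t) = 0 := by
  rw [posLog_eq_zero_iff, abs_of_nonneg (div_nonneg hr (hr.trans hrt))]
  exact div_le_one_of_le₀ hrt (hr.trans hrt)

lemma posLog_div_eq_log_div {r t : ℝ} (ht : 0 ≤ t) (htr : t ≤ r) :
    log⁺ (r / t) = log (r / t) := by
  rcases ht.eq_or_lt with rfl | ht_pos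
  · simp
  · exact posLog_eq_log (((one_le_div ht_pos).2 htr).trans (le_abs_self _))

lemma continuous_mul_log_div (r : ℝ) : Continuous fun t : ℝ ↦ t * log (r / t) := by
  rcases eq_or_ne r 0 with rfl | hr
  · simpa using continuous_const
  · have hsplit : (fun t : ℝ ↦ t * log (r / t)) = fun t ↦ t * log r - t * log t := by
      funext t
      rcases eq_or_ne t 0 with rfl | ht
      · simp
      · rw [log_div hr ht, mul_sub]
    rw [hsplit]
    exact (continuous_id.mul continuous_const).sub continuous_mul_log

lemma continuous_mul_posLog_div (r : ℝ) : Continuous fun t : ℝ ↦ t * log⁺ (r / t) := by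
  refine continuous_iff_continuousAt.2 fun t ↦ ?_
  rcases eq_or_ne t 0 with rfl | ht
  · have hlim : Filter.Tendsto (fun t ↦ ‖t * log (r / t)‖) (nhds 0) (nhds 0) :=
      (continuous_mul_log_div r).norm.tendsto' 0 0 (by simp)
    rw [ContinuousAt, zero_mul]
    refine squeeze_zero_norm (fun t ↦ ?_) hlim
    rw [norm_mul, norm_mul, Real.norm_of_nonneg posLog_nonneg]
    gcongr
    exact max_le (norm_nonneg _) (le_abs_self _)
  · exact continuousAt_id.mul
      (continuous_posLog.continuousAt.comp (continuousAt_const.div₀ continuousAt_id ht))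

lemma hasDerivAt_pow_mul_log_div {r t : ℝ} (hr : r ≠ 0) (ht : t ≠ 0) (k : ℕ) :
    HasDerivAt (fun t ↦ t ^ k * (t * log (r / t)) / (k + 1) + t ^ (k + 1) / (k + 1) ^ 2)
      (t ^ k * log (r / t)) t := by
  have hlog : HasDerivAt (fun t ↦ log (r / t)) (-t⁻¹) t := by
    refine (((hasDerivAt_const t r).div (hasDerivAt_id t) ht).log
      (div_ne_zero hr ht)).congr_deriv ?_
    simp only [id_eq, zero_mul, mul_one, zero_sub, Pi.div_apply]
    field_simp
  have hsum := (((hasDerivAt_pow (k + 1) t).mul hlog).div_const ((k : ℝ) + 1)).add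
    ((hasDerivAt_pow (k + 1) t).div_const (((k : ℝ) + 1) ^ 2))
  refine (hsum.congr_deriv ?_).congr_of_eventuallyEq (.of_forall fun s ↦ ?_)
  · rw [add_tsub_cancel_right]
    push_cast
    field_simp
    ring
  · simp [pow_succ, mul_assoc]

lemma continuous_pow_mul_mul_log_div_add_pow (r : ℝ) (k : ℕ) :
    Continuous fun t ↦ t ^ k * (t * log (r / t)) / (k + 1) + t ^ (k + 1) / (k + 1 : ℝ) ^ 2 := by
  have := continuous_mul_log_div r
  fun_prop

lemma integrableOn_Ioc_pow_mul_log_div {r : ℝ} (hr : 0 < r) (k : ℕ) :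
    IntegrableOn (fun t ↦ t ^ k * log (r / t)) (Set.Ioc 0 r) :=
  intervalIntegral.integrableOn_deriv_of_nonneg
    (continuous_pow_mul_mul_log_div_add_pow r k).continuousOn
    (fun _ ht ↦ hasDerivAt_pow_mul_log_div hr.ne' ht.1.ne' k)
    fun _ ht ↦ mul_nonneg (pow_nonneg ht.1.le k) (log_nonneg ((one_le_div ht.1).2 ht.2.le))

lemma integral_Ioc_pow_mul_log_div {r : ℝ} (hr : 0 < r) (k : ℕ) :
    ∫ t in Set.Ioc 0 r, t ^ k * log (r / t) = r ^ (k + 1) / (k + 1) ^ 2 := by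
  rw [← intervalIntegral.integral_of_le hr.le,
    intervalIntegral.integral_eq_sub_of_hasDerivAt_of_le hr.le
      (continuous_pow_mul_mul_log_div_add_pow r k).continuousOn
      (fun t ht ↦ hasDerivAt_pow_mul_log_div hr.ne' ht.1.ne' k)
      ((intervalIntegrable_iff_integrableOn_Ioc_of_le hr.le).2
        (integrableOn_Ioc_pow_mul_log_div hr k))]
  simp [hr.ne']

lemma pow_mul_posLog_div_eq_indicator {r t : ℝ} (hr : 0 ≤ r) (ht : 0 < t) (k : ℕ) :
    t ^ k * log⁺ (r / t) = (Set.Ioc 0 r).indicator (fun t ↦ t ^ k * log (r / t)) t := by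
  rcases le_or_gt t r with htr | hrt
  · rw [Set.indicator_of_mem (Set.mem_Ioc.2 ⟨ht, htr⟩), posLog_div_eq_log_div ht.le htr]
  · rw [Set.indicator_of_notMem fun h ↦ hrt.not_ge h.2, posLog_div_eq_zero hr hrt.le, mul_zero]

lemma integrableOn_Ioi_pow_mul_posLog_div {r : ℝ} (hr : 0 < r) (k : ℕ) :
    IntegrableOn (fun t ↦ t ^ k * log⁺ (r / t)) (Set.Ioi 0) := by
  refine ((integrableOn_Ioc_pow_mul_log_div hr k).integrable_indicator
    measurableSet_Ioc).integrableOn.congr_fun (fun t ht ↦ ?_) measurableSet_Ioi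
  exact (pow_mul_posLog_div_eq_indicator hr.le ht k).symm

lemma integral_Ioi_pow_mul_posLog_div {r : ℝ} (hr : 0 < r) (k : ℕ) :
    ∫ t in Set.Ioi 0, t ^ k * log⁺ (r / t) = r ^ (k + 1) / (k + 1) ^ 2 := by
  rw [setIntegral_congr_fun measurableSet_Ioi fun t ht ↦
      pow_mul_posLog_div_eq_indicator hr.le ht k,
    setIntegral_indicator measurableSet_Ioc, Set.inter_eq_right.2 Set.Ioc_subset_Ioi_self,
    integral_Ioc_pow_mul_log_div hr]

variable {E : Type*} [NormedAddCommGroup E] [MeasurableSpace E] [BorelSpace E] {μ : Measure E}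

lemma setIntegral_ball_log_div_dist_smul {F : Type*} [NormedAddCommGroup F] [NormedSpace ℝ F]
    [μ.IsAddLeftInvariant] {r : ℝ} (hr : 0 ≤ r) (x : E)
    (f : E → F) :
    ∫ y in ball x r, log (r / dist x y) • f y ∂μ = ∫ y, log⁺ (r / ‖y‖) • f (x + y) ∂μ := by
  have hlog {y : E} (hy : y ∈ ball x r) : log (r / dist x y) = log⁺ (r / dist x y) :=
    (posLog_div_eq_log_div dist_nonneg (mem_ball'.1 hy).le).symm
  have hzero {y : E} (hy : y ∉ ball x r) : log⁺ (r / dist x y) = 0 :=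
    posLog_div_eq_zero hr (not_lt.1 (mt mem_ball'.2 hy))
  calc ∫ y in ball x r, log (r / dist x y) • f y ∂μ
      = ∫ y in ball x r, log⁺ (r / dist x y) • f y ∂μ :=
        setIntegral_congr_fun measurableSet_ball fun y hy ↦ by simp only [hlog hy]
    _ = ∫ y, log⁺ (r / dist x y) • f y ∂μ :=
        setIntegral_eq_integral_of_forall_compl_eq_zero fun y hy ↦ by rw [hzero hy, zero_smul]
    _ = ∫ y, log⁺ (r / ‖y‖) • f (x + y) ∂μ := by
        rw [← integral_add_left_eq_self _ x]
        simp only [dist_self_add_right]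

variable [NormedSpace ℝ E] [FiniteDimensional ℝ E] [Nontrivial E] [μ.IsAddHaarMeasure]

lemma integrable_posLog_div_norm {r : ℝ} (hr : 0 < r) :
    Integrable (fun y : E ↦ log⁺ (r / ‖y‖)) μ :=
  (integrable_fun_norm_addHaar μ (f := fun t ↦ log⁺ (r / t))).2
    (integrableOn_Ioi_pow_mul_posLog_div hr _)

lemma integral_posLog_div_norm {r : ℝ} (hr : 0 < r) (x : E) :
    ∫ y : E, log⁺ (r / ‖y‖) ∂μ = μ.real (ball x r) / Module.finrank ℝ E := by
  obtain ⟨k, hk⟩ := Nat.exists_eq_succ_of_ne_zero (Module.finrank_pos (R := ℝ) (M := E)).ne'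
  have hball : μ.real (ball x r) = r ^ (k + 1) * μ.real (ball 0 1) := by
    rw [measureReal_def, Measure.addHaar_ball _ _ hr.le, ENNReal.toReal_mul,
      ENNReal.toReal_ofReal (by positivity), hk, measureReal_def]
  rw [integral_fun_norm_addHaar μ fun t ↦ log⁺ (r / t), hball, hk]
  simp only [Nat.succ_eq_add_one, add_tsub_cancel_right, smul_eq_mul, nsmul_eq_mul,
    integral_Ioi_pow_mul_posLog_div hr]
  push_cast
  field_simp

end LogWeight

theorem stmt_1_general {E F : Type*} [NormedAddCommGroup E] [InnerProductSpace ℝ E]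
    [FiniteDimensional ℝ E] [Nontrivial E] [MeasurableSpace E] [BorelSpace E] {μ : Measure E}
    [μ.IsAddHaarMeasure] [NormedAddCommGroup F] [NormedSpace ℝ F] [CompleteSpace F] {f : E → F}
    {x : E} {r : ℝ} (hr : 0 < r) (hf : InnerProductSpace.HarmonicOnNhd f (closedBall x r)) :
    f x = (Module.finrank ℝ E / μ.real (ball x r)) •
      ∫ y in ball x r, log (r / dist x y) • f y ∂μ := by
  have hball : μ.real (ball x r) ≠ 0 :=
    (ENNReal.toReal_pos (measure_ball_pos μ x hr).ne' measure_ball_lt_top.ne).ne'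
  have hdim : (Module.finrank ℝ E : ℝ) ≠ 0 := by exact_mod_cast Module.finrank_pos.ne'
  rw [setIntegral_ball_log_div_dist_smul hr.le,
    integral_radial_smul_eq_integral_smul (continuous_mul_posLog_div r)
      (fun t ↦ posLog_div_eq_zero hr.le) (integrable_posLog_div_norm hr) hf,
    integral_posLog_div_norm hr x, smul_smul, div_mul_div_cancel₀ hball, div_self hdim, one_smul]

theorem HarmonicOn.harmonicOnNhd {m : ℕ} {u : EuclideanSpace ℝ (Fin m) → ℝ}
    {D : Set (EuclideanSpace ℝ (Fin m))} (hu : HarmonicOn u D) (hD : IsOpen D) :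
    InnerProductSpace.HarmonicOnNhd u D := by
  have hu₂ {y} (hy : y ∈ D) : ContDiffAt ℝ 2 u y := hu.1.contDiffAt (hD.mem_nhds hy)
  refine fun y hy ↦ ⟨hu₂ hy, ?_⟩
  filter_upwards [hD.mem_nhds hy] with z hz
  rw [laplacian_eq_sum_fderiv_fderiv (EuclideanSpace.basisFun (Fin m) ℝ) (hu₂ hz)]
  simpa only [EuclideanSpace.basisFun_apply, laplacian, Pi.zero_apply] using hu.2 z hz

theorem stmt_1 (m : ℕ) (hm : 2 ≤ m) (D : Set (EuclideanSpace ℝ (Fin m)))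
    (hDopen : IsOpen D) (hDconn : IsConnected D)
    (u : EuclideanSpace ℝ (Fin m) → ℝ) (hu : HarmonicOn u D)
    (x : EuclideanSpace ℝ (Fin m)) (r : ℝ) (hr : 0 < r)
    (hball : closedBall x r ⊆ D) :
    u x = ((m : ℝ) / (volume (ball x r)).toReal)
        * ∫ y in ball x r, u y * Real.log (r / dist x y) := by
  have : Nontrivial (EuclideanSpace ℝ (Fin m)) :=
    Module.nontrivial_of_finrank_pos (R := ℝ) (by rw [finrank_euclideanSpace_fin]; omega)
  simpa [mul_comm, Measure.real] using
    stmt_1_general (μ := volume) hr ((hu.harmonicOnNhd hDopen).mono hball)
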